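/- arXiv:1507.08695 — 4 statements merged into one kernel-verified Lean document; each statement's English description precedes it below -/
import Mathlib

section
/- Let X be a Banach space, let N ≥ 2, and let P₁,…,P_N be projections on X. Set T = (P₁ + ⋯ + P_N)/N. Suppose α ≥ 0 and β ≥ 0 are constants such that ‖P_i‖ ≤ β for every 1 ≤ i ≤ N, such that ‖(P_i P_j − P_j P_i)v‖ ≤ α·‖(P_i − P_j)v‖ for all 1 ≤ i < j ≤ N and all v ∈ X, and such that (2N−3)·α < 1 and (N−2)·β < N − 1 − (2N−3)·α. Then there exist constants r with 0 ≤ r < 1 and C ≥ 0 and a bounded linear operator T^∞ on X such that ‖T^∞ − Tⁿ‖ ≤ C·rⁿ for every n ∈ ℕ, T^∞ is a projection, and range(T^∞) = ⋂_{i=1}^N range(P_i). -/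
open Finset

/-- One step of the averaging operator contracts the maximal defect. -/
lemma avg_contract_step {X : Type*} [NormedAddCommGroup X] [NormedSpace ℂ X]
    (N : ℕ) (hN : 2 ≤ N) (P : Fin N → X →L[ℂ] X)
    (hproj : ∀ i v, P i (P i v) = P i v)
    (α β : ℝ) (hα : 0 ≤ α) (hβ : 0 ≤ β)
    (hP : ∀ i v, ‖P i v‖ ≤ β * ‖v‖)
    (hcomm : ∀ i j v, ‖P i (P j v) - P j (P i v)‖ ≤ α * ‖P i v - P j v‖)
    (T : X →L[ℂ] X) (hT : ∀ v, T v = (N : ℂ)⁻¹ • ∑ i, P i v)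
    (v : X) (M : ℝ) (hM : ∀ i j, ‖P i v - P j v‖ ≤ M) (i j : Fin N) :
    ‖P i (T v) - P j (T v)‖ ≤
      ((1 + (2 * (N : ℝ) - 3) * α + ((N : ℝ) - 2) * β) / N) * M := by
  have hM0 : 0 ≤ M := (norm_nonneg _).trans (hM i j)
  have hN2 : (2 : ℝ) ≤ N := by exact_mod_cast hN
  have hr0 : 0 ≤ (1 + (2 * (N : ℝ) - 3) * α + ((N : ℝ) - 2) * β) / N := by
    have h1 : 0 ≤ (2 * (N : ℝ) - 3) * α := mul_nonneg (by linarith) hα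
    have h2 : 0 ≤ ((N : ℝ) - 2) * β := mul_nonneg (by linarith) hβ
    positivity
  by_cases hij : i = j
  · subst hij
    simp only [sub_self, norm_zero]
    positivity
  have e1 : P i (T v) - P j (T v) = (N : ℂ)⁻¹ • ∑ k, (P i (P k v) - P j (P k v)) := by
    rw [hT, map_smul, map_smul, map_sum, map_sum, ← smul_sub, Finset.sum_sub_distrib]
  set f : Fin N → X := fun k => P i (P k v) - P j (P k v) with hf
  have hjmem : j ∈ univ.erase i := by simp [Ne.symm hij]
  have e2 : ∑ k, f k = (f i + f j) + ∑ k ∈ (univ.erase i).erase j, f k := by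
    rw [← Finset.add_sum_erase univ f (mem_univ i), ← Finset.add_sum_erase _ f hjmem, add_assoc]
  have b1 : ‖f i + f j‖ ≤ (1 + α) * M := by
    have : f i + f j = (P i v - P j v) + (P i (P j v) - P j (P i v)) := by
      simp only [hf, hproj]; abel
    rw [this]
    calc _ ≤ ‖P i v - P j v‖ + α * ‖P i v - P j v‖ :=
          (norm_add_le _ _).trans (by gcongr; exact hcomm i j v)
      _ ≤ M + α * M := by gcongr <;> exact hM i j
      _ = _ := by ring
  have b2 : ∀ k, ‖f k‖ ≤ (β + 2 * α) * M := by
    intro k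
    have : f k = P k (P i v - P j v) + (P i (P k v) - P k (P i v))
        - (P j (P k v) - P k (P j v)) := by
      simp only [hf, map_sub]; abel
    rw [this]
    have h1 : ‖P k (P i v - P j v)‖ ≤ β * M := (hP k _).trans (by gcongr; exact hM i j)
    have h2 : ‖P i (P k v) - P k (P i v)‖ ≤ α * M := (hcomm i k v).trans (by gcongr; exact hM i k)
    have h3 : ‖P j (P k v) - P k (P j v)‖ ≤ α * M := (hcomm j k v).trans (by gcongr; exact hM j k)
    have h4 := norm_sub_le (P k (P i v - P j v) + (P i (P k v) - P k (P i v)))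
      (P j (P k v) - P k (P j v))
    have h5 := norm_add_le (P k (P i v - P j v)) (P i (P k v) - P k (P i v))
    linarith
  have hcard : (((univ.erase i).erase j).card : ℝ) = (N : ℝ) - 2 := by
    rw [Finset.card_erase_of_mem hjmem, Finset.card_erase_of_mem (mem_univ i), Finset.card_univ,
      Fintype.card_fin, Nat.sub_sub]
    push_cast [hN]
    norm_num
  have b3 : ‖∑ k ∈ (univ.erase i).erase j, f k‖ ≤ ((N : ℝ) - 2) * ((β + 2 * α) * M) := by
    rw [← hcard, ← nsmul_eq_mul]
    exact (norm_sum_le _ _).trans (Finset.sum_le_card_nsmul _ _ _ (fun k _ => b2 k))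
  rw [e1, e2, norm_smul, norm_inv, Complex.norm_natCast]
  have b4 := (norm_add_le (f i + f j) (∑ k ∈ (univ.erase i).erase j, f k)).trans (add_le_add b1 b3)
  calc (N : ℝ)⁻¹ * _ ≤ (N : ℝ)⁻¹ * ((1 + α) * M + ((N : ℝ) - 2) * ((β + 2 * α) * M)) := by gcongr
    _ = _ := by ring

/-- Quick uniform convergence of averaged projections: if the commutator defect constants and the
norms of the projections are small enough, then `Tⁿ = ((P₁+⋯+P_N)/N)ⁿ` converges geometrically in
operator norm to a projection onto `⋂ range (P i)`. -/
theorem averaged_projections_quick_uniform_convergence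
    {X : Type*} [NormedAddCommGroup X] [NormedSpace ℂ X] [CompleteSpace X]
    (N : ℕ) (hN : 2 ≤ N) (P : Fin N → X →L[ℂ] X)
    (hproj : ∀ i, P i ∘L P i = P i)
    (α β : ℝ) (hα : 0 ≤ α) (hβ : 0 ≤ β)
    (hPnorm : ∀ i, ‖P i‖ ≤ β)
    (hcomm : ∀ i j : Fin N, i < j → ∀ v : X,
      ‖(P i ∘L P j - P j ∘L P i) v‖ ≤ α * ‖(P i - P j) v‖)
    (hαsmall : (2 * (N : ℝ) - 3) * α < 1)
    (hβsmall : ((N : ℝ) - 2) * β < (N : ℝ) - 1 - (2 * (N : ℝ) - 3) * α)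
    (T : X →L[ℂ] X) (hT : T = (N : ℂ)⁻¹ • ∑ i, P i) :
    ∃ (r C : ℝ) (Tinf : X →L[ℂ] X),
      0 ≤ r ∧ r < 1 ∧ 0 ≤ C ∧
      (∀ n : ℕ, ‖Tinf - T ^ n‖ ≤ C * r ^ n) ∧
      Tinf ∘L Tinf = Tinf ∧
      Set.range Tinf = ⋂ i, Set.range (P i) := by
  have hproj' : ∀ i v, P i (P i v) = P i v := fun i v => by
    have := congrArg (fun A : X →L[ℂ] X => A v) (hproj i)
    simpa using this
  have hP : ∀ i v, ‖P i v‖ ≤ β * ‖v‖ := fun i v => (P i).le_of_opNorm_le (hPnorm i) v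
  have hcomm' : ∀ i j v, ‖P i (P j v) - P j (P i v)‖ ≤ α * ‖P i v - P j v‖ := by
    intro i j v
    rcases lt_trichotomy i j with h | h | h
    · simpa using hcomm i j h v
    · subst h; simp
    · rw [norm_sub_rev, norm_sub_rev (P i v)]
      simpa using hcomm j i h v
  have hT' : ∀ v, T v = (N : ℂ)⁻¹ • ∑ i, P i v := fun v => by
    rw [hT]; simp
  have hN2 : (2 : ℝ) ≤ N := by exact_mod_cast hN
  have hN0 : (0 : ℝ) < N := by linarith
  have hNC : (N : ℂ) ≠ 0 := by
    have : N ≠ 0 := by omega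
    exact_mod_cast this
  have step := avg_contract_step N hN P hproj' α β hα hβ hP hcomm' T hT'
  set r : ℝ := (1 + (2 * (N : ℝ) - 3) * α + ((N : ℝ) - 2) * β) / N with hr
  have hrpos : 0 < r := by
    have h1 : 0 ≤ (2 * (N : ℝ) - 3) * α := mul_nonneg (by linarith) hα
    have h2 : 0 ≤ ((N : ℝ) - 2) * β := mul_nonneg (by linarith) hβ
    positivity
  have hr1 : r < 1 := by
    rw [hr, div_lt_one hN0]; linarith
  have pow_succ_apply : ∀ (n : ℕ) (v : X), (T ^ (n + 1)) v = T ((T ^ n) v) := fun n v => by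
    rw [pow_succ']; rfl
  have hD : ∀ (n : ℕ) (v : X) (i j), ‖P i ((T ^ n) v) - P j ((T ^ n) v)‖
      ≤ r ^ n * (2 * β * ‖v‖) := by
    intro n v
    induction n with
    | zero =>
      intro i j
      have := norm_sub_le (P i v) (P j v)
      have h1 := hP i v
      have h2 := hP j v
      simp only [pow_zero, one_mul, ContinuousLinearMap.one_apply]
      linarith
    | succ n ih =>
      intro i j
      rw [pow_succ_apply]
      refine (step _ _ ih i j).trans (le_of_eq ?_)
      ring
  -- the increment
  have hinc : ∀ (w : X) (M : ℝ), (∀ i j, ‖P i w - P j w‖ ≤ M) →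
      ‖T (T w) - T w‖ ≤ (α + β) * M := by
    intro w M hM
    have avg : ∀ (g : Fin N → X) (c : ℝ), (∀ k, ‖g k‖ ≤ c) →
        ‖(N : ℂ)⁻¹ • ∑ k, g k‖ ≤ c := by
      intro g c hg
      rw [norm_smul, norm_inv, Complex.norm_natCast, inv_mul_le_iff₀ hN0]
      have := (norm_sum_le univ g).trans (Finset.sum_le_card_nsmul _ _ c (fun k _ => hg k))
      simpa using this
    have key : ∀ u c, (∀ j, ‖P j u - u‖ ≤ c) → ‖T u - u‖ ≤ c := by
      intro u c hu
      have : T u - u = (N : ℂ)⁻¹ • ∑ k, (P k u - u) := by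
        rw [hT', Finset.sum_sub_distrib, smul_sub]
        simp only [sum_const, card_univ, Fintype.card_fin]
        rw [← Nat.cast_smul_eq_nsmul ℂ, inv_smul_smul₀ hNC]
      rw [this]
      exact avg _ _ hu
    have e : T (T w) - T w = (N : ℂ)⁻¹ • ∑ k, (T (P k w) - P k w) := by
      rw [Finset.sum_sub_distrib, smul_sub, ← hT' w, ← map_sum, ← map_smul, ← hT' w]
    rw [e]
    refine avg _ _ fun k => key _ _ fun j => ?_
    have e3 : P j (P k w) - P k w = (P j (P k w) - P k (P j w)) + P k (P j w - P k w) := by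
      rw [map_sub, hproj']; abel
    rw [e3]
    calc _ ≤ α * ‖P j w - P k w‖ + β * ‖P j w - P k w‖ :=
          (norm_add_le _ _).trans (add_le_add (hcomm' _ _ _) (hP _ _))
      _ ≤ α * M + β * M := by gcongr <;> exact hM j k
      _ = _ := by ring
  set C : ℝ := ‖T - 1‖ + (α + β) * (2 * β) / r with hC
  have hC0 : 0 ≤ C := by positivity
  have hgeo : ∀ n, dist (T ^ n) (T ^ (n + 1)) ≤ C * r ^ n := by
    intro n
    rw [dist_comm, dist_eq_norm]
    cases n with
    | zero =>
      simp only [pow_zero, zero_add, pow_one, mul_one, hC]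
      have : 0 ≤ (α + β) * (2 * β) / r := by positivity
      linarith
    | succ n =>
      refine ContinuousLinearMap.opNorm_le_bound _ (by positivity) fun v => ?_
      rw [ContinuousLinearMap.sub_apply, pow_succ_apply (n + 1), pow_succ_apply n]
      refine (hinc _ _ (hD n v)).trans ?_
      have : (α + β) * (r ^ n * (2 * β * ‖v‖))
          = ((α + β) * (2 * β) / r) * r ^ (n + 1) * ‖v‖ := by
        field_simp
        ring
      rw [this]
      gcongr
      rw [hC]
      linarith [norm_nonneg (T - 1)]
  obtain ⟨S, hS⟩ := cauchySeq_tendsto_of_complete (cauchySeq_of_le_geometric r C hr1 hgeo)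
  have hSv : ∀ v, Filter.Tendsto (fun n => (T ^ n) v) Filter.atTop (nhds (S v)) := fun v =>
    ((ContinuousLinearMap.apply ℂ X v).continuous.tendsto S).comp hS
  have hTS : ∀ v, T (S v) = S v := by
    intro v
    have h1 := (T.continuous.tendsto (S v)).comp (hSv v)
    have h2 := (hSv v).comp (Filter.tendsto_add_atTop_nat 1)
    refine tendsto_nhds_unique h1 (h2.congr fun n => ?_)
    exact pow_succ_apply n v
  have heq : ∀ v i j, P i (S v) = P j (S v) := by
    intro v i j
    have h1 := ((P i - P j).continuous.tendsto (S v)).comp (hSv v)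
    have h2 : Filter.Tendsto (fun n => (P i - P j) ((T ^ n) v)) Filter.atTop (nhds 0) := by
      refine squeeze_zero_norm (a := fun n => r ^ n * (2 * β * ‖v‖)) (fun n => by simpa using hD n v i j) ?_
      simpa using (tendsto_pow_atTop_nhds_zero_of_lt_one hrpos.le hr1).mul_const (2 * β * ‖v‖)
    have h3 := tendsto_nhds_unique h1 h2
    rw [ContinuousLinearMap.sub_apply] at h3
    exact sub_eq_zero.mp h3
  have hfix : ∀ v i, P i (S v) = S v := by
    intro v i
    have h := hTS v
    rw [hT', Finset.sum_congr rfl (fun k _ => heq v k i), sum_const, card_univ, Fintype.card_fin,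
      ← Nat.cast_smul_eq_nsmul ℂ, inv_smul_smul₀ hNC] at h
    exact h
  have hid : ∀ v, (∀ i, P i v = v) → S v = v := by
    intro v hv
    have hTv : T v = v := by
      rw [hT', Finset.sum_congr rfl (fun k _ => hv k), sum_const, card_univ, Fintype.card_fin,
        ← Nat.cast_smul_eq_nsmul ℂ, inv_smul_smul₀ hNC]
    have hn : ∀ n : ℕ, (T ^ n) v = v := by
      intro n
      induction n with
      | zero => simp
      | succ n ih => rw [pow_succ_apply, ih, hTv]
    have h := hSv v
    simp only [hn] at h
    exact tendsto_nhds_unique h tendsto_const_nhds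
  refine ⟨r, C / (1 - r), S, hrpos.le, hr1, div_nonneg hC0 (by linarith), ?_, ?_, ?_⟩
  · intro n
    have := dist_le_of_le_geometric_of_tendsto r C hr1 hgeo hS n
    rw [dist_comm, dist_eq_norm] at this
    refine this.trans (le_of_eq ?_)
    ring
  · ext v
    exact hid _ (hfix v)
  · ext v
    simp only [Set.mem_iInter, Set.mem_range]
    constructor
    · rintro ⟨w, rfl⟩ i
      exact ⟨S w, hfix w i⟩
    · intro h
      refine ⟨v, hid v fun i => ?_⟩
      obtain ⟨w, rfl⟩ := h i
      exact hproj' i w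
end

section
/- Let X be a Banach space, let P₁, P₂ be projections on X, and let P₁₂ be a compatible corner projection for (P₁,P₂). Set β = max{‖P₁‖, ‖P₂‖} and c = cos∠(P₁,P₂). If c < 1, then for every v ∈ X one has ‖(P₁P₂ − P₂P₁)v‖ ≤ (2(1+β)·c/(1−c))·‖(P₁ − P₂)v‖. -/
/-- If `P₁, P₂` are projections on a Banach space with a compatible corner projection `P₁₂`
(for which `cos∠(P₁,P₂) = max{‖P₁∘(P₂−P₁₂)‖, ‖P₂∘(P₁−P₁₂)‖} < 1`), then for every `v`,
`‖(P₁P₂ − P₂P₁)v‖ ≤ (2(1+β)c/(1−c))·‖(P₁−P₂)v‖`, where `β = max{‖P₁‖,‖P₂‖}`. -/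
theorem commutator_bound_of_angle
    {X : Type*} [NormedAddCommGroup X] [NormedSpace ℂ X] [CompleteSpace X]
    (P₁ P₂ P₁₂ : X →L[ℂ] X)
    (hP₁ : P₁ ∘L P₁ = P₁) (hP₂ : P₂ ∘L P₂ = P₂) (hP₁₂ : P₁₂ ∘L P₁₂ = P₁₂)
    (hrange : Set.range P₁₂ = Set.range P₁ ∩ Set.range P₂)
    (hc₁ : P₁₂ ∘L P₁ = P₁₂) (hc₂ : P₁₂ ∘L P₂ = P₁₂)
    (β c : ℝ)
    (hβ : β = max ‖P₁‖ ‖P₂‖)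
    (hcos : c = max ‖P₁ ∘L (P₂ - P₁₂)‖ ‖P₂ ∘L (P₁ - P₁₂)‖)
    (hc : c < 1) :
    ∀ v : X, ‖(P₁ ∘L P₂ - P₂ ∘L P₁) v‖ ≤ 2 * (1 + β) * c / (1 - c) * ‖(P₁ - P₂) v‖ := by
  intro v
  have e1 : ∀ x, P₁ (P₁ x) = P₁ x := fun x => DFunLike.congr_fun hP₁ x
  have e2 : ∀ x, P₂ (P₂ x) = P₂ x := fun x => DFunLike.congr_fun hP₂ x
  have e3 : ∀ x, P₁₂ (P₁₂ x) = P₁₂ x := fun x => DFunLike.congr_fun hP₁₂ x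
  have k1 : ∀ x, P₁₂ (P₁ x) = P₁₂ x := fun x => DFunLike.congr_fun hc₁ x
  have k2 : ∀ x, P₁₂ (P₂ x) = P₁₂ x := fun x => DFunLike.congr_fun hc₂ x
  have hm : ∀ x, P₁₂ x ∈ Set.range P₁ ∩ Set.range P₂ := fun x => hrange ▸ Set.mem_range_self x
  have f1 : ∀ x, P₁ (P₁₂ x) = P₁₂ x := fun x => by
    obtain ⟨⟨y, hy⟩, -⟩ := hm x
    rw [← hy, e1]
  have f2 : ∀ x, P₂ (P₁₂ x) = P₁₂ x := fun x => by
    obtain ⟨-, ⟨y, hy⟩⟩ := hm x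
    rw [← hy, e2]
  have b1 : ‖P₁‖ ≤ β := hβ ▸ le_max_left _ _
  have b2 : ‖P₂‖ ≤ β := hβ ▸ le_max_right _ _
  have c1 : ‖P₁ ∘L (P₂ - P₁₂)‖ ≤ c := hcos ▸ le_max_left _ _
  have c2 : ‖P₂ ∘L (P₁ - P₁₂)‖ ≤ c := hcos ▸ le_max_right _ _
  have c0 : 0 ≤ c := (norm_nonneg _).trans c1
  obtain ⟨a, ha⟩ : ∃ a, a = P₁ v - P₁₂ v := ⟨_, rfl⟩
  obtain ⟨b, hb⟩ : ∃ b, b = P₂ v - P₁₂ v := ⟨_, rfl⟩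
  obtain ⟨d, hd⟩ : ∃ d, d = (P₁ - P₂) v := ⟨_, rfl⟩
  have n1 : ‖P₁ b‖ ≤ c * ‖b‖ := by
    have h := (P₁ ∘L (P₂ - P₁₂)).le_of_opNorm_le c1 b
    have h' : (P₁ ∘L (P₂ - P₁₂)) b = P₁ b := by simp [hb, e2, f2, k2, e3]
    rwa [h'] at h
  have n2 : ‖P₂ a‖ ≤ c * ‖a‖ := by
    have h := (P₂ ∘L (P₁ - P₁₂)).le_of_opNorm_le c2 a
    have h' : (P₂ ∘L (P₁ - P₁₂)) a = P₂ a := by simp [ha, e1, f1, k1, e3]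
    rwa [h'] at h
  have m1 : ‖a‖ ≤ β * ‖d‖ + c * ‖b‖ := by
    have h : a = P₁ d + P₁ b := by simp [ha, hb, hd, e1, f1]
    have h1 := P₁.le_of_opNorm_le b1 d
    have h2 := norm_add_le (P₁ d) (P₁ b)
    rw [← h] at h2
    linarith
  have m2 : ‖b‖ ≤ β * ‖d‖ + c * ‖a‖ := by
    have h : b = P₂ a - P₂ d := by simp [ha, hb, hd, e2, f2]
    have h1 := P₂.le_of_opNorm_le b2 d
    have h2 := norm_sub_le (P₂ a) (P₂ d)
    rw [← h] at h2
    linarith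
  have hcomm : (P₁ ∘L P₂ - P₂ ∘L P₁) v = P₁ b - P₂ a := by simp [ha, hb, f1, f2]
  have hn := norm_sub_le (P₁ b) (P₂ a)
  rw [hcomm, ← hd, div_mul_eq_mul_div, le_div_iff₀ (by linarith)]
  have hs : (‖a‖ + ‖b‖) * (1 - c) ≤ 2 * (1 + β) * ‖d‖ := by
    have := norm_nonneg d
    linarith
  calc ‖P₁ b - P₂ a‖ * (1 - c) ≤ (c * (‖a‖ + ‖b‖)) * (1 - c) :=
        mul_le_mul_of_nonneg_right (by linarith) (by linarith)
    _ = c * ((‖a‖ + ‖b‖) * (1 - c)) := by ring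
    _ ≤ c * (2 * (1 + β) * ‖d‖) := mul_le_mul_of_nonneg_left hs c0
    _ = _ := by ring
end

section
/- Let X be a Banach space, let P₁, P₂ be projections on X, and let P₁₂ be a compatible corner projection for (P₁,P₂). Set β = max{‖P₁‖, ‖P₂‖} and c = cos∠(P₁,P₂). If c < 1, then for every v ∈ X one has max{‖(P₁ − P₁₂)v‖, ‖(P₂ − P₁₂)v‖} ≤ ((1+β)/(1−c))·‖(P₁ − P₂)v‖. -/
theorem corner_aux
    {X : Type*} [NormedAddCommGroup X] [NormedSpace ℂ X]
    (P Q R : X →L[ℂ] X)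
    (hP : ∀ x, P (P x) = P x) (hQ : ∀ x, Q (Q x) = Q x) (hR : ∀ x, R (R x) = R x)
    (hPR : ∀ x, P (R x) = R x) (hQR : ∀ x, Q (R x) = R x)
    (hRP : ∀ x, R (P x) = R x)
    (β c : ℝ) (hβ : ‖Q‖ ≤ β) (hcos : ‖Q ∘L (P - R)‖ ≤ c) (hc : c < 1) (v : X) :
    ‖(P - R) v‖ ≤ (1 + β) / (1 - c) * ‖(P - Q) v‖ := by
  have h1 : (Q ∘L (P - R)) ((P - R) v) = Q ((P - R) v) := by
    simp [hP, hR, hPR, hRP]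
  have h2 : ‖Q ((P - R) v)‖ ≤ c * ‖(P - R) v‖ := by
    rw [← h1]
    exact ContinuousLinearMap.le_of_opNorm_le _ hcos _
  have h3 : (P - R) v = Q ((P - R) v) + ((P - Q) v - Q ((P - Q) v)) := by
    simp [hQ, hQR]
  have h4 : ‖Q ((P - Q) v)‖ ≤ β * ‖(P - Q) v‖ := ContinuousLinearMap.le_of_opNorm_le _ hβ _
  have h5 : ‖(P - R) v‖ ≤ ‖Q ((P - R) v)‖ + (‖(P - Q) v‖ + ‖Q ((P - Q) v)‖) := by
    calc ‖(P - R) v‖ = ‖Q ((P - R) v) + ((P - Q) v - Q ((P - Q) v))‖ := by rw [← h3]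
      _ ≤ _ := (norm_add_le _ _).trans (by gcongr; exact norm_sub_le _ _)
  rw [div_mul_eq_mul_div, le_div_iff₀ (by linarith)]
  linarith

/-- If `P₁, P₂` are projections on a Banach space with a compatible corner projection `P₁₂`
(for which `cos∠(P₁,P₂) = max{‖P₁∘(P₂−P₁₂)‖, ‖P₂∘(P₁−P₁₂)‖} < 1`), then for every `v`,
`max{‖(P₁−P₁₂)v‖, ‖(P₂−P₁₂)v‖} ≤ ((1+β)/(1−c))·‖(P₁−P₂)v‖`, where `β = max{‖P₁‖,‖P₂‖}`. -/
theorem corner_projection_difference_bound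
    {X : Type*} [NormedAddCommGroup X] [NormedSpace ℂ X] [CompleteSpace X]
    (P₁ P₂ P₁₂ : X →L[ℂ] X)
    (hP₁ : P₁ ∘L P₁ = P₁) (hP₂ : P₂ ∘L P₂ = P₂) (hP₁₂ : P₁₂ ∘L P₁₂ = P₁₂)
    (hrange : Set.range P₁₂ = Set.range P₁ ∩ Set.range P₂)
    (hc₁ : P₁₂ ∘L P₁ = P₁₂) (hc₂ : P₁₂ ∘L P₂ = P₁₂)
    (β c : ℝ)
    (hβ : β = max ‖P₁‖ ‖P₂‖)
    (hcos : c = max ‖P₁ ∘L (P₂ - P₁₂)‖ ‖P₂ ∘L (P₁ - P₁₂)‖)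
    (hc : c < 1) :
    ∀ v : X, max ‖(P₁ - P₁₂) v‖ ‖(P₂ - P₁₂) v‖ ≤ (1 + β) / (1 - c) * ‖(P₁ - P₂) v‖ := by
  have e₁ : ∀ x, P₁ (P₁ x) = P₁ x := fun x => DFunLike.congr_fun hP₁ x
  have e₂ : ∀ x, P₂ (P₂ x) = P₂ x := fun x => DFunLike.congr_fun hP₂ x
  have e₃ : ∀ x, P₁₂ (P₁₂ x) = P₁₂ x := fun x => DFunLike.congr_fun hP₁₂ x
  have f₁ : ∀ x, P₁₂ (P₁ x) = P₁₂ x := fun x => DFunLike.congr_fun hc₁ x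
  have f₂ : ∀ x, P₁₂ (P₂ x) = P₁₂ x := fun x => DFunLike.congr_fun hc₂ x
  have hm : ∀ x, P₁₂ x ∈ Set.range P₁ ∩ Set.range P₂ := fun x => hrange ▸ Set.mem_range_self x
  have g₁ : ∀ x, P₁ (P₁₂ x) = P₁₂ x := by
    intro x
    obtain ⟨y, hy⟩ := (hm x).1
    rw [← hy, e₁]
  have g₂ : ∀ x, P₂ (P₁₂ x) = P₁₂ x := by
    intro x
    obtain ⟨y, hy⟩ := (hm x).2
    rw [← hy, e₂]
  intro v
  apply max_le
  · exact corner_aux P₁ P₂ P₁₂ e₁ e₂ e₃ g₁ g₂ f₁ β c (hβ ▸ le_max_right _ _)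
      (hcos ▸ le_max_right _ _) hc v
  · have h := corner_aux P₂ P₁ P₁₂ e₂ e₁ e₃ g₂ g₁ f₂ β c (hβ ▸ le_max_left _ _)
      (hcos ▸ le_max_left _ _) hc v
    have hs : ‖(P₁ - P₂) v‖ = ‖(P₂ - P₁) v‖ := by
      simpa using norm_sub_rev (P₁ v) (P₂ v)
    rw [hs]
    exact h
end

section
/- Let X be a Banach space, let N ≥ 2, let P₁,…,P_N be projections on X, and suppose that for each pair 1 ≤ i < j ≤ N there exists a compatible corner projection P_{i,j} for (P_i,P_j). Set T = (P₁ + ⋯ + P_N)/N. Suppose γ ≥ 0 and β ≥ 0 are constants such that cos∠(P_i,P_j) ≤ γ (computed relative to P_{i,j}) for all 1 ≤ i < j ≤ N, ‖P_i‖ ≤ β for all i, and such that (8N−11)·γ < 1 and (β − 1)·(N − 2 + (3N−4)·γ) < 1 − (8N−11)·γ. Then there exist constants r with 0 ≤ r < 1 and C ≥ 0 and a bounded linear operator T^∞ on X such that ‖T^∞ − Tⁿ‖ ≤ C·rⁿ for every n ∈ ℕ, T^∞ is a projection, and range(T^∞) = ⋂_{i=1}^N range(P_i). -/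
open Finset

/-- Commutator estimate for a pair of projections with a compatible corner. -/
theorem pair_commutator_bound {A : Type*} [NormedRing A] (p q s S : A) (γ e : ℝ)
    (hp : p * p = p) (hq : q * q = q) (hps : p * s = s) (hqs : q * s = s)
    (hsp : s * p = s) (hsq : s * q = s) (hss : s * s = s)
    (h1 : ‖p * q - s‖ ≤ γ) (h2 : ‖q * p - s‖ ≤ γ) (hγ0 : 0 ≤ γ) (hγ : γ ≤ 1 / 2)
    (he : ‖(p - q) * S‖ ≤ e) :
    ‖(p * q - q * p) * S‖ ≤ 4 * γ * e := by
  have he0 : 0 ≤ e := (norm_nonneg _).trans he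
  have key : ∀ p q : A, p * p = p → q * q = q → p * s = s → q * s = s → s * p = s → s * q = s →
      ‖p * q - s‖ ≤ γ → ‖(p - q) * S‖ ≤ e →
      ‖(p * q - s) * S‖ ≤ γ * e + γ * ‖(q * p - s) * S‖ := by
    intro p q hp hq hps hqs hsp hsq h1 he
    have e1 : (p * q - s) * (q * p - s) = p * q * p - s := by
      have a1 : p * q * (q * p) = p * q * p := by
        rw [mul_assoc p q (q * p), ← mul_assoc q q p, hq, mul_assoc]
      have a2 : p * q * s = s := by rw [mul_assoc, hqs, hps]
      have a3 : s * (q * p) = s := by rw [← mul_assoc, hsq, hsp]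
      rw [sub_mul, mul_sub, mul_sub, a1, a2, a3, hss]; abel
    have e2 : (p * q - s) * (p - q) = p * q * p - s - (p * q - s) := by
      have a1 : p * q * q = p * q := by rw [mul_assoc, hq]
      rw [sub_mul, mul_sub, mul_sub, a1, hsp, hsq]; abel
    have e3 : (p * q - s) * S
        = (p * q - s) * ((q * p - s) * S) - (p * q - s) * ((p - q) * S) := by
      rw [← mul_assoc, ← mul_assoc, e1, e2, ← sub_mul]
      congr 1; abel
    calc ‖(p * q - s) * S‖
        = ‖(p * q - s) * ((q * p - s) * S) - (p * q - s) * ((p - q) * S)‖ := by rw [← e3]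
      _ ≤ ‖(p * q - s) * ((q * p - s) * S)‖ + ‖(p * q - s) * ((p - q) * S)‖ := norm_sub_le _ _
      _ ≤ γ * ‖(q * p - s) * S‖ + γ * e := by
          gcongr
          · exact (norm_mul_le _ _).trans (by gcongr)
          · exact (norm_mul_le _ _).trans (by gcongr)
      _ = _ := by ring
  have he' : ‖(q - p) * S‖ ≤ e := by
    rw [← neg_sub p q, neg_mul, norm_neg]; exact he
  have k1 := key p q hp hq hps hqs hsp hsq h1 he
  have k2 := key q p hq hp hqs hps hsq hsp h2 he'
  have e4 : (p * q - q * p) * S = (p * q - s) * S - (q * p - s) * S := by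
    rw [← sub_mul]; congr 1; abel
  rw [e4]
  refine (norm_sub_le _ _).trans ?_
  have n1 := norm_nonneg ((p * q - s) * S)
  have n2 := norm_nonneg ((q * p - s) * S)
  nlinarith

/-- One step of averaging contracts the maximal difference of projections. -/
theorem averaging_step {A : Type*} [NormedRing A] [NormedAlgebra ℂ A] (N : ℕ) (hN : 2 ≤ N)
    (P : Fin N → A) (S : A) (γ β e : ℝ) (hγ0 : 0 ≤ γ)
    (hproj : ∀ i, P i * P i = P i) (hPn : ∀ i, ‖P i‖ ≤ β)
    (hcomm : ∀ i j, i ≠ j → ‖(P i * P j - P j * P i) * S‖ ≤ 4 * γ * e)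
    (he : ∀ i j, ‖(P i - P j) * S‖ ≤ e) (he0 : 0 ≤ e) (hβ : 0 ≤ β) (i j : Fin N) :
    ‖(P i - P j) * (((N : ℂ)⁻¹ • ∑ k, P k) * S)‖
      ≤ (1 + (N - 2) * β + (8 * N - 12) * γ) / N * e := by
  have hN' : (2 : ℝ) ≤ N := by exact_mod_cast hN
  have hr : 0 ≤ (1 + ((N : ℝ) - 2) * β + (8 * N - 12) * γ) / N := by
    have : 0 ≤ ((N : ℝ) - 2) * β := mul_nonneg (by linarith) hβ
    have : 0 ≤ (8 * (N : ℝ) - 12) * γ := mul_nonneg (by linarith) hγ0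
    positivity
  by_cases hij : i = j
  · subst hij
    simp only [sub_self, zero_mul, norm_zero]
    positivity
  have hj : j ∈ (univ : Finset (Fin N)).erase i := by simp [Ne.symm hij]
  have hsum : ∑ k, P k = P i + (P j + ∑ k ∈ (univ.erase i).erase j, P k) := by
    rw [add_sum_erase _ _ hj, add_sum_erase _ _ (mem_univ i)]
  have hcard : (((univ : Finset (Fin N)).erase i).erase j).card = N - 2 := by
    rw [card_erase_of_mem hj, card_erase_of_mem (mem_univ i), card_univ, Fintype.card_fin]
    omega
  have hterm : ∀ k ∈ ((univ : Finset (Fin N)).erase i).erase j,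
      ‖(P i - P j) * P k * S‖ ≤ β * e + 8 * γ * e := by
    intro k hk
    simp only [mem_erase, mem_univ, and_true] at hk
    have e1 : (P i - P j) * P k * S = P k * ((P i - P j) * S)
        + (P i * P k - P k * P i) * S - (P j * P k - P k * P j) * S := by noncomm_ring
    rw [e1]
    have b1 : ‖P k * ((P i - P j) * S)‖ ≤ β * e :=
      (norm_mul_le _ _).trans (mul_le_mul (hPn k) (he i j) (norm_nonneg _) hβ)
    have b2 := hcomm i k (Ne.symm hk.2)
    have b3 := hcomm j k (Ne.symm hk.1)
    refine (norm_sub_le _ _).trans ?_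
    have := norm_add_le (P k * ((P i - P j) * S)) ((P i * P k - P k * P i) * S)
    linarith
  have hmain : (P i - P j) * ((∑ k, P k) * S) = (P i - P j) * S
      + (P i * P j - P j * P i) * S
      + ∑ k ∈ ((univ : Finset (Fin N)).erase i).erase j, (P i - P j) * P k * S := by
    rw [← sum_mul, ← mul_sum, hsum, ← mul_assoc, ← add_mul, ← add_mul]
    congr 1
    rw [mul_add, mul_add, ← add_assoc]
    congr 1
    rw [sub_mul, sub_mul, hproj, hproj]; abel
  have hbd : ‖(P i - P j) * ((∑ k, P k) * S)‖ ≤ e + 4 * γ * e + (N - 2) * (β * e + 8 * γ * e) := by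
    rw [hmain]
    refine (norm_add₃_le).trans ?_
    gcongr
    · exact he i j
    · exact hcomm i j hij
    · refine (norm_sum_le_of_le _ hterm).trans ?_
      rw [sum_const, hcard, nsmul_eq_mul, Nat.cast_sub hN]
      simp
  rw [smul_mul_assoc, mul_smul_comm, norm_smul, norm_inv, Complex.norm_natCast]
  calc (N : ℝ)⁻¹ * ‖(P i - P j) * ((∑ k, P k) * S)‖
      ≤ (N : ℝ)⁻¹ * (e + 4 * γ * e + (N - 2) * (β * e + 8 * γ * e)) := by gcongr
    _ = _ := by rw [div_eq_inv_mul]; ring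

/-- Criterion for quick uniform convergence of the averaged projections method via angles between
projections: if each pair `(P i, P j)`, `i < j`, admits a compatible corner projection `Q i j`
with `cos∠(P i, P j) ≤ γ`, `‖P i‖ ≤ β` for all `i`, and `γ, β` satisfy `(8N−11)γ < 1` and
`(β−1)(N−2+(3N−4)γ) < 1−(8N−11)γ`, then `Tⁿ = ((P₁+⋯+P_N)/N)ⁿ` converges geometrically in
operator norm to a projection onto `⋂ range (P i)`. -/
theorem averaged_projections_convergence_of_angles
    {X : Type*} [NormedAddCommGroup X] [NormedSpace ℂ X] [CompleteSpace X]
    (N : ℕ) (hN : 2 ≤ N) (P : Fin N → X →L[ℂ] X) (Q : Fin N → Fin N → X →L[ℂ] X)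
    (hproj : ∀ i, P i ∘L P i = P i)
    (hQproj : ∀ i j : Fin N, i < j → Q i j ∘L Q i j = Q i j)
    (hQrange : ∀ i j : Fin N, i < j → Set.range (Q i j) = Set.range (P i) ∩ Set.range (P j))
    (hQc₁ : ∀ i j : Fin N, i < j → Q i j ∘L P i = Q i j)
    (hQc₂ : ∀ i j : Fin N, i < j → Q i j ∘L P j = Q i j)
    (γ β : ℝ) (hγ : 0 ≤ γ) (hβ : 0 ≤ β)
    (hcos : ∀ i j : Fin N, i < j →
      max ‖P i ∘L (P j - Q i j)‖ ‖P j ∘L (P i - Q i j)‖ ≤ γ)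
    (hPnorm : ∀ i, ‖P i‖ ≤ β)
    (hγsmall : (8 * (N : ℝ) - 11) * γ < 1)
    (hβsmall : (β - 1) * ((N : ℝ) - 2 + (3 * (N : ℝ) - 4) * γ) < 1 - (8 * (N : ℝ) - 11) * γ)
    (T : X →L[ℂ] X) (hT : T = (N : ℂ)⁻¹ • ∑ i, P i) :
    ∃ (r C : ℝ) (Tinf : X →L[ℂ] X),
      0 ≤ r ∧ r < 1 ∧ 0 ≤ C ∧
      (∀ n : ℕ, ‖Tinf - T ^ n‖ ≤ C * r ^ n) ∧
      Tinf ∘L Tinf = Tinf ∧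
      Set.range Tinf = ⋂ i, Set.range (P i) := by
  have hN' : (2 : ℝ) ≤ N := by exact_mod_cast hN
  have hN0 : (N : ℂ) ≠ 0 := by
    have : N ≠ 0 := by omega
    exact_mod_cast this
  have i0 : Fin N := ⟨0, by omega⟩
  -- reduce to a bound that is at least one
  obtain ⟨b, hb1, hPb, hbs⟩ : ∃ b : ℝ, 1 ≤ b ∧ (∀ i, ‖P i‖ ≤ b) ∧
      (b - 1) * ((N : ℝ) - 2 + (3 * (N : ℝ) - 4) * γ) < 1 - (8 * (N : ℝ) - 11) * γ := by
    by_cases h : 1 ≤ β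
    · exact ⟨β, h, hPnorm, hβsmall⟩
    · refine ⟨1, le_refl _, fun i => (hPnorm i).trans (by linarith), ?_⟩
      simp only [sub_self, zero_mul]; linarith
  have hb0 : 0 ≤ b := by linarith
  have hγ2 : γ ≤ 1 / 2 := by nlinarith
  set r : ℝ := (1 + ((N : ℝ) - 2) * b + (8 * N - 12) * γ) / N with hr
  have hr0 : 0 < r := by
    have : 0 ≤ ((N : ℝ) - 2) * b := mul_nonneg (by linarith) hb0
    have : 0 ≤ (8 * (N : ℝ) - 12) * γ := mul_nonneg (by linarith) hγ
    positivity
  have hr1 : r < 1 := by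
    rw [hr, div_lt_one (by linarith)]
    have : 0 ≤ (b - 1) * ((3 * (N : ℝ) - 4) * γ) :=
      mul_nonneg (by linarith) (mul_nonneg (by linarith) hγ)
    nlinarith
  have hp : ∀ i, P i * P i = P i := hproj
  have hfix : ∀ i x, x ∈ Set.range (P i) → P i x = x := by
    rintro i x ⟨y, rfl⟩
    exact congrArg (fun f : X →L[ℂ] X => f y) (hproj i)
  have hcomm' : ∀ (S : X →L[ℂ] X) (e : ℝ), (∀ i j, ‖(P i - P j) * S‖ ≤ e) →
      ∀ i j, i < j → ‖(P i * P j - P j * P i) * S‖ ≤ 4 * γ * e := by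
    intro S e he i j hij
    have hQmem : ∀ x, Q i j x ∈ Set.range (P i) ∩ Set.range (P j) := fun x => by
      rw [← hQrange i j hij]; exact ⟨x, rfl⟩
    have q1 : P i * Q i j = Q i j := by
      ext x; exact hfix i _ (hQmem x).1
    have q2 : P j * Q i j = Q i j := by
      ext x; exact hfix j _ (hQmem x).2
    have c1 : ‖P i * (P j - Q i j)‖ ≤ γ := (le_max_left _ _).trans (hcos i j hij)
    have c2 : ‖P j * (P i - Q i j)‖ ≤ γ := (le_max_right _ _).trans (hcos i j hij)
    rw [mul_sub, q1] at c1
    rw [mul_sub, q2] at c2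
    exact pair_commutator_bound (P i) (P j) (Q i j) S γ e (hp i) (hp j) q1 q2
      (hQc₁ i j hij) (hQc₂ i j hij) (hQproj i j hij) c1 c2 hγ hγ2 (he i j)
  have hcomm : ∀ (S : X →L[ℂ] X) (e : ℝ), (∀ i j, ‖(P i - P j) * S‖ ≤ e) →
      ∀ i j, i ≠ j → ‖(P i * P j - P j * P i) * S‖ ≤ 4 * γ * e := by
    intro S e he i j hij
    rcases lt_or_gt_of_ne hij with h | h
    · exact hcomm' S e he i j h
    · rw [← neg_sub, neg_mul, norm_neg]; exact hcomm' S e he j i h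
  have hdec : ∀ n : ℕ, ∀ i j, ‖(P i - P j) * T ^ n‖ ≤ 2 * b * r ^ n := by
    intro n
    induction n with
    | zero =>
      intro i j
      rw [pow_zero, pow_zero, mul_one, mul_one]
      have := norm_sub_le (P i) (P j)
      linarith [hPb i, hPb j]
    | succ n ih =>
      intro i j
      have := averaging_step N hN P (T ^ n) γ b (2 * b * r ^ n) hγ hp hPb (hcomm _ _ ih) ih
        (by positivity) hb0 i j
      rw [← hT, ← pow_succ'] at this
      refine this.trans (le_of_eq ?_)
      rw [← hr]; ring
  have hTP : ∀ i (n : ℕ), ‖(T - P i) * T ^ n‖ ≤ 2 * b * r ^ n := by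
    intro i n
    have e1 : (T - P i) * T ^ n = (N : ℂ)⁻¹ • ∑ k, (P k - P i) * T ^ n := by
      rw [← sum_mul, ← smul_mul_assoc, sum_sub_distrib, smul_sub, ← hT]
      congr 2
      rw [sum_const, card_univ, Fintype.card_fin, ← Nat.cast_smul_eq_nsmul ℂ, smul_smul,
        inv_mul_cancel₀ hN0, one_smul]
    rw [e1, norm_smul, norm_inv, Complex.norm_natCast]
    have : ‖∑ k, (P k - P i) * T ^ n‖ ≤ N * (2 * b * r ^ n) := by
      refine (norm_sum_le_of_le _ (fun k _ => hdec n k i)).trans ?_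
      simp
    rw [inv_mul_le_iff₀ (by linarith)]
    exact this
  have hstep : ∀ n : ℕ, ‖T ^ (n + 2) - T ^ (n + 1)‖ ≤ b * (2 * b * r ^ n) := by
    intro n
    have e1 : T ^ (n + 2) - T ^ (n + 1) = (N : ℂ)⁻¹ • ∑ k, P k * ((T - P k) * T ^ n) := by
      have e2 : ∀ k, P k * ((T - P k) * T ^ n) = P k * (T ^ (n + 1) - T ^ n) := by
        intro k
        rw [sub_mul, mul_sub, ← mul_assoc (P k) (P k), hp, ← pow_succ', mul_sub]
      simp_rw [e2]
      rw [← sum_mul, ← smul_mul_assoc, ← hT, mul_sub, ← pow_succ', ← pow_succ']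
    rw [e1, norm_smul, norm_inv, Complex.norm_natCast]
    have : ‖∑ k, P k * ((T - P k) * T ^ n)‖ ≤ N * (b * (2 * b * r ^ n)) := by
      refine (norm_sum_le_of_le _ (f := fun k => P k * ((T - P k) * T ^ n))
        (n := fun _ => b * (2 * b * r ^ n)) (fun k _ => (norm_mul_le _ _).trans
        (mul_le_mul (hPb k) (hTP k n) (norm_nonneg _) hb0))).trans ?_
      simp
    rw [inv_mul_le_iff₀ (by linarith)]
    exact this
  set C : ℝ := ‖T - 1‖ + 2 * b ^ 2 / r with hC
  have hC0 : 0 ≤ C := by positivity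
  have hgeo : ∀ n : ℕ, dist (T ^ n) (T ^ (n + 1)) ≤ C * r ^ n := by
    intro n
    rw [dist_comm, dist_eq_norm]
    cases n with
    | zero =>
      rw [zero_add, pow_one, pow_zero, pow_zero, mul_one]
      have : 0 ≤ 2 * b ^ 2 / r := by positivity
      linarith
    | succ n =>
      refine (hstep n).trans ?_
      have : C * r ^ (n + 1) = ‖T - 1‖ * r ^ (n + 1) + b * (2 * b * r ^ n) := by
        rw [hC]; field_simp; ring
      rw [this]
      have : 0 ≤ ‖T - 1‖ * r ^ (n + 1) := by positivity
      linarith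
  obtain ⟨L, hL⟩ := cauchySeq_tendsto_of_complete (cauchySeq_of_le_geometric r C hr1 hgeo)
  have hPL : ∀ i j, P i * L = P j * L := by
    intro i j
    have t1 : Filter.Tendsto (fun n : ℕ => (P i - P j) * T ^ n) Filter.atTop
        (nhds ((P i - P j) * L)) := hL.const_mul _
    have t2 : Filter.Tendsto (fun n : ℕ => (P i - P j) * T ^ n) Filter.atTop (nhds 0) := by
      refine squeeze_zero_norm (fun n => hdec n i j) ?_
      simpa using (tendsto_pow_atTop_nhds_zero_of_lt_one hr0.le hr1).const_mul (2 * b)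
    have := tendsto_nhds_unique t1 t2
    rw [sub_mul] at this
    exact sub_eq_zero.mp this
  have hTL : T * L = L := by
    have t1 : Filter.Tendsto (fun n : ℕ => T * T ^ n) Filter.atTop (nhds (T * L)) :=
      hL.const_mul _
    have t2 : Filter.Tendsto (fun n : ℕ => T * T ^ n) Filter.atTop (nhds L) := by
      simp_rw [← pow_succ']
      exact (Filter.tendsto_add_atTop_iff_nat 1).mpr hL
    exact tendsto_nhds_unique t1 t2
  have hPiL : ∀ i, P i * L = L := by
    intro i
    have : T * L = P i * L := by
      rw [hT, smul_mul_assoc, sum_mul, sum_congr rfl (fun k _ => hPL k i), sum_const, card_univ,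
        Fintype.card_fin, ← Nat.cast_smul_eq_nsmul ℂ, smul_smul, inv_mul_cancel₀ hN0, one_smul]
    rw [← this, hTL]
  have hLx : ∀ x, (∀ i, P i x = x) → L x = x := by
    intro x hx
    have hTx : T x = x := by
      rw [hT]
      simp only [ContinuousLinearMap.smul_apply, ContinuousLinearMap.sum_apply, hx]
      rw [sum_const, card_univ,
        Fintype.card_fin, ← Nat.cast_smul_eq_nsmul ℂ, smul_smul, inv_mul_cancel₀ hN0, one_smul]
    have hTn : ∀ n : ℕ, (T ^ n) x = x := by
      intro n
      induction n with
      | zero => simp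
      | succ n ih => rw [pow_succ, ContinuousLinearMap.mul_apply, hTx, ih]
    have t1 : Filter.Tendsto (fun n : ℕ => (T ^ n) x) Filter.atTop (nhds (L x)) :=
      ((ContinuousLinearMap.apply ℂ X x).continuous.tendsto L).comp hL
    simp_rw [hTn] at t1
    exact (tendsto_nhds_unique t1 tendsto_const_nhds)
  have hPLx : ∀ i x, P i (L x) = L x := fun i x =>
    congrArg (fun f : X →L[ℂ] X => f x) (hPiL i)
  refine ⟨r, C / (1 - r), L, hr0.le, hr1, div_nonneg hC0 (by linarith), ?_, ?_, ?_⟩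
  · intro n
    have := dist_le_of_le_geometric_of_tendsto r C hr1 hgeo hL n
    rw [dist_comm, dist_eq_norm] at this
    refine this.trans (le_of_eq ?_)
    ring
  · ext x
    exact hLx (L x) (fun i => hPLx i x)
  · ext x
    simp only [Set.mem_iInter]
    constructor
    · rintro ⟨y, rfl⟩ i
      exact ⟨L y, hPLx i y⟩
    · intro h
      exact ⟨x, hLx x (fun i => hfix i x (h i))⟩
end
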